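/- arXiv:2503.06231 — 3 statements merged into one kernel-verified Lean document; each statement's English description precedes it below -/
import Mathlib

section
/- (Transitive overlap agreement) If a window family x̂ satisfies L_stitch(x̂) = 0, then any two windows agree at every shared global timestep: for all j ≤ j' < n, i < w and i' < w with j·s + i = j'·s + i', one has x̂ j i = x̂ j' i'. -/
open scoped BigOperators

/-- Self-guidance loss: squared errors at observed positions. -/
noncomputable def Lself {C w n : ℕ}
    (x : Fin n → Fin w → EuclideanSpace ℝ (Fin C))
    (m : Fin n → Fin w → Bool)
    (xh : Fin n → Fin w → EuclideanSpace ℝ (Fin C)) : ℝ :=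
  ∑ j : Fin n, ∑ i : Fin w,
    if m j i = false then ‖xh j i - x j i‖ ^ 2 else 0

/-- Stitch loss: squared discrepancies on overlaps of consecutive windows. -/
noncomputable def Lstitch {C w n : ℕ} (s : ℕ)
    (xh : Fin n → Fin w → EuclideanSpace ℝ (Fin C)) : ℝ :=
  ∑ j : Fin n, ∑ i : Fin w,
    if h : 1 ≤ (j : ℕ) ∧ (i : ℕ) < w - s then
      ‖xh j i - xh ⟨(j : ℕ) - 1, by have := j.isLt; omega⟩
          ⟨(i : ℕ) + s, by have := h.2; omega⟩‖ ^ 2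
    else 0

/-- Conditional loss: sum of self-guidance and stitch losses. -/
noncomputable def Lcond {C w n : ℕ} (s : ℕ)
    (x : Fin n → Fin w → EuclideanSpace ℝ (Fin C))
    (m : Fin n → Fin w → Bool)
    (xh : Fin n → Fin w → EuclideanSpace ℝ (Fin C)) : ℝ :=
  Lself x m xh + Lstitch s xh

/-- A window family is real if it is extracted from a single sequence `y`
and matches the observations at observed positions. -/
def isReal {C w n : ℕ} (s : ℕ)
    (x : Fin n → Fin w → EuclideanSpace ℝ (Fin C))
    (m : Fin n → Fin w → Bool)
    (xh : Fin n → Fin w → EuclideanSpace ℝ (Fin C)) : Prop :=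
  (∃ y : ℕ → EuclideanSpace ℝ (Fin C),
      ∀ (j : Fin n) (i : Fin w), xh j i = y ((j : ℕ) * s + (i : ℕ))) ∧
  (∀ (j : Fin n) (i : Fin w), m j i = false → xh j i = x j i)

/-- A family of windows with stride `s` is *stitched* if any two consecutive windows agree on their
overlap: position `i + s` of a window and position `i` of the next one are the same global timestep.
The neighbours enter through equations in `ℕ`, which avoids truncated subtraction and casts between
`Fin` indices. -/
def IsStitched {α : Type*} {w n : ℕ} (s : ℕ) (x : Fin n → Fin w → α) : Prop :=
  ∀ ⦃j j' : Fin n⦄ ⦃i i' : Fin w⦄, (j' : ℕ) = j + 1 → (i : ℕ) = i' + s → x j i = x j' i'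

namespace IsStitched

variable {α : Type*} {w n s : ℕ} {x : Fin n → Fin w → α}

theorem eq_of_eq_add_mul (hx : IsStitched s x) {d : ℕ} {j j' : Fin n} {i i' : Fin w}
    (hj : (j' : ℕ) = j + d) (hi : (i : ℕ) = i' + d * s) : x j i = x j' i' := by
  induction d generalizing j' i' with
  | zero =>
    obtain rfl : j' = j := Fin.ext hj
    obtain rfl : i = i' := Fin.ext (by simpa using hi)
    rfl
  | succ d ih =>
    -- A timestep shared by windows `j` and `j + d + 1` also lies in window `j + d`.
    have hi_succ : (i : ℕ) = i' + s + d * s := by rw [hi]; ring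
    let k : Fin n := ⟨j + d, by omega⟩
    let l : Fin w := ⟨i' + s, by omega⟩
    calc x j i = x k l := ih rfl hi_succ
      _ = x j' i' := hx hj rfl

theorem eq_of_timestep_eq (hx : IsStitched s x) {j j' : Fin n} {i i' : Fin w}
    (h : (j : ℕ) * s + i = j' * s + i') : x j i = x j' i' := by
  wlog hjj' : (j : ℕ) ≤ j' generalizing j j' i i'
  · exact (this h.symm (le_of_not_ge hjj')).symm
  obtain ⟨d, hd⟩ := Nat.exists_eq_add_of_le hjj'
  refine hx.eq_of_eq_add_mul hd ?_
  rw [hd, add_mul] at h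
  omega

end IsStitched

theorem Lstitch_eq_zero_iff {C w n s : ℕ} {x : Fin n → Fin w → EuclideanSpace ℝ (Fin C)} :
    Lstitch s x = 0 ↔ IsStitched s x := by
  have term_nonneg (j : Fin n) (i : Fin w) : 0 ≤ if h : 1 ≤ (j : ℕ) ∧ (i : ℕ) < w - s then
      ‖x j i - x ⟨j - 1, by omega⟩ ⟨i + s, by omega⟩‖ ^ 2 else 0 := by
    split_ifs <;> positivity
  have sum_eq_zero_iff : Lstitch s x = 0 ↔ ∀ (j : Fin n) (i : Fin w)
      (_ : 1 ≤ (j : ℕ) ∧ (i : ℕ) < w - s), x j i = x ⟨j - 1, by omega⟩ ⟨i + s, by omega⟩ := by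
    rw [Lstitch, Finset.sum_eq_zero_iff_of_nonneg fun j _ ↦
      Finset.sum_nonneg fun i _ ↦ term_nonneg j i]
    simp only [Finset.sum_eq_zero_iff_of_nonneg fun i _ ↦ term_nonneg _ i, Finset.mem_univ,
      forall_const, dite_eq_right_iff, sq_eq_zero_iff, norm_eq_zero, sub_eq_zero]
  rw [sum_eq_zero_iff]
  constructor
  · intro h j j' i i' hj hi
    have j_eq : j = ⟨j' - 1, by omega⟩ := Fin.ext (by simp [hj])
    have i_eq : i = ⟨i' + s, by omega⟩ := Fin.ext hi
    rw [j_eq, i_eq]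
    exact (h j' i' ⟨by omega, by omega⟩).symm
  · intro h j i hji
    exact (h (Nat.sub_add_cancel hji.1).symm rfl).symm

/-- Transitive overlap agreement: zero stitch loss forces any two windows to
agree at every shared global timestep. -/
theorem transitive_overlap_agreement (C w s n : ℕ) (hC : 1 ≤ C) (hw : 1 ≤ w)
    (hs1 : 1 ≤ s) (hsw : s ≤ w) (hn : 1 ≤ n)
    (xh : Fin n → Fin w → EuclideanSpace ℝ (Fin C))
    (h : Lstitch s xh = 0) :
    ∀ (j j' : Fin n) (i i' : Fin w), (j : ℕ) ≤ (j' : ℕ) →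
      (j : ℕ) * s + (i : ℕ) = (j' : ℕ) * s + (i' : ℕ) →
      xh j i = xh j' i' :=
  fun _ _ _ _ _ hstep ↦ (Lstitch_eq_zero_iff.mp h).eq_of_timestep_eq hstep
end

section
/- (Zero conditional loss does not determine the sample: ambiguity of conditional generation) Suppose the observed signals are consistent, i.e., there exists a sequence y₀ : ℕ → EuclideanSpace ℝ (Fin C) with x j i = y₀ (j·s + i) for all j < n, i < w with m j i = false. Suppose further there exists a global timestep k which is covered by some window (k = j₀·s + i₀ with j₀ < n, i₀ < w) and which is missing in every window that covers it (for all j < n, i < w with j·s + i = k, m j i = true). Then there exist two distinct window families x̂₁ ≠ x̂₂ with L_cond(x̂₁) = 0 and L_cond(x̂₂) = 0. -/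
open scoped BigOperators

theorem sum_sum_eq_zero_iff_of_nonneg {ι κ M : Type*} [Fintype ι] [Fintype κ]
    [AddCommMonoid M] [PartialOrder M] [IsOrderedAddMonoid M] {f : ι → κ → M}
    (hf : ∀ i j, 0 ≤ f i j) : ∑ i, ∑ j, f i j = 0 ↔ ∀ i j, f i j = 0 := by
  rw [Finset.sum_eq_zero_iff_of_nonneg fun i _ ↦ Finset.sum_nonneg fun j _ ↦ hf i j]
  simp [Finset.sum_eq_zero_iff_of_nonneg, hf]

section

variable {C w n s : ℕ} {x xh : Fin n → Fin w → EuclideanSpace ℝ (Fin C)}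
  {m : Fin n → Fin w → Bool}

theorem Lself_eq_zero_iff :
    Lself x m xh = 0 ↔ ∀ j i, m j i = false → xh j i = x j i := by
  rw [Lself, sum_sum_eq_zero_iff_of_nonneg fun j i ↦ by positivity]
  simp [sub_eq_zero]

-- Windows and offsets are paired by additive equations so that neither the truncated
-- subtractions nor the bound proofs in `Lstitch` reach its users.
theorem Lstitch_eq_zero_iff_s12 :
    Lstitch s xh = 0 ↔ ∀ (j j' : Fin n) (i i' : Fin w),
      (j : ℕ) = j' + 1 → (i' : ℕ) = i + s → xh j i = xh j' i' := by
  have terms_eq_zero : Lstitch s xh = 0 ↔ ∀ (j : Fin n) (i : Fin w)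
      (h : 1 ≤ (j : ℕ) ∧ (i : ℕ) < w - s),
      xh j i = xh ⟨j - 1, by lia⟩ ⟨i + s, by lia⟩ := by
    rw [Lstitch, sum_sum_eq_zero_iff_of_nonneg fun j i ↦ by split_ifs <;> positivity]
    simp [sub_eq_zero]
  rw [terms_eq_zero]
  constructor
  · intro h j j' i i' hj hi
    convert h j i (by lia) using 2 <;> ext <;> simp [hj, hi]
  · intro h j i hji
    exact h _ _ _ _ (Nat.sub_add_cancel hji.1).symm rfl

theorem isReal.Lcond_eq_zero (h : isReal s x m xh) : Lcond s x m xh = 0 := by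
  obtain ⟨⟨y, hy⟩, hobs⟩ := h
  have stitched : Lstitch s xh = 0 := by
    refine Lstitch_eq_zero_iff_s12.mpr fun j j' i i' hj hi ↦ ?_
    rw [hy, hy, hj, hi]
    congr 1
    ring
  rw [Lcond, Lself_eq_zero_iff.mpr hobs, stitched, add_zero]

theorem exists_isReal_apply_eq_of_missing {y : ℕ → EuclideanSpace ℝ (Fin C)}
    (hy : ∀ (j : Fin n) (i : Fin w), m j i = false → x j i = y (j * s + i))
    (j₀ : Fin n) (i₀ : Fin w)
    (hmiss : ∀ (j : Fin n) (i : Fin w), (j * s + i : ℕ) = j₀ * s + i₀ → m j i = true)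
    (v : EuclideanSpace ℝ (Fin C)) :
    ∃ xh, isReal s x m xh ∧ xh j₀ i₀ = v := by
  let y' := Function.update y (j₀ * s + i₀) v
  refine ⟨fun j i ↦ y' (j * s + i), ⟨⟨y', fun _ _ ↦ rfl⟩, fun j i hobs ↦ ?_⟩,
    Function.update_self ..⟩
  have hne : (j * s + i : ℕ) ≠ j₀ * s + i₀ := fun h ↦ by simp [hmiss j i h] at hobs
  exact (Function.update_of_ne hne ..).trans (hy j i hobs).symm

end

/-- Ambiguity of conditional generation: if the observations are consistent
and some covered global timestep is missing in every window that covers it,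
then there are two distinct window families, both with zero conditional
loss. -/
theorem zero_cond_loss_ambiguous (C w s n : ℕ) (hC : 1 ≤ C) (hw : 1 ≤ w)
    (hs1 : 1 ≤ s) (hsw : s ≤ w) (hn : 1 ≤ n)
    (x : Fin n → Fin w → EuclideanSpace ℝ (Fin C))
    (m : Fin n → Fin w → Bool)
    (y₀ : ℕ → EuclideanSpace ℝ (Fin C))
    (hy₀ : ∀ (j : Fin n) (i : Fin w), m j i = false →
        x j i = y₀ ((j : ℕ) * s + (i : ℕ)))
    (k : ℕ) (j₀ : Fin n) (i₀ : Fin w)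
    (hk : k = (j₀ : ℕ) * s + (i₀ : ℕ))
    (hmiss : ∀ (j : Fin n) (i : Fin w),
        (j : ℕ) * s + (i : ℕ) = k → m j i = true) :
    ∃ xh₁ xh₂ : Fin n → Fin w → EuclideanSpace ℝ (Fin C),
      xh₁ ≠ xh₂ ∧ Lcond s x m xh₁ = 0 ∧ Lcond s x m xh₂ = 0 := by
  subst hk
  have : Nonempty (Fin C) := ⟨⟨0, hC⟩⟩
  obtain ⟨u, v, huv⟩ := exists_pair_ne (EuclideanSpace ℝ (Fin C))
  obtain ⟨xh₁, hreal₁, hu⟩ := exists_isReal_apply_eq_of_missing hy₀ j₀ i₀ hmiss u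
  obtain ⟨xh₂, hreal₂, hv⟩ := exists_isReal_apply_eq_of_missing hy₀ j₀ i₀ hmiss v
  have hne : xh₁ ≠ xh₂ := by
    rintro rfl
    exact huv (hu.symm.trans hv)
  exact ⟨xh₁, xh₂, hne, hreal₁.Lcond_eq_zero, hreal₂.Lcond_eq_zero⟩
end

section
/- (Reparameterisation trick: closed form of the DDPM forward process) Let x₀ ∈ ℝ and let α : ℕ → ℝ satisfy 0 < α t ≤ 1 for all t ≥ 1, and set ᾱ t = ∏_{u=1}^{t} α u (so ᾱ 0 = 1). Define a sequence of probability measures μ : ℕ → Measure ℝ by μ 0 = the Dirac measure at x₀, and for t ≥ 1, μ t is the law of √(α t) · X + √(1 − α t) · Z where X ~ μ (t−1) and Z ~ N(0,1) are independent (i.e., μ t is the pushforward of the product measure (μ (t−1)) × gaussianReal 0 1 under (p, z) ↦ √(α t)·p + √(1 − α t)·z). Then for every t ≥ 0, μ t equals the Gaussian measure with mean √(ᾱ t) · x₀ and variance 1 − ᾱ t (interpreting the Gaussian with variance 0 as the Dirac measure at its mean). -/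
open MeasureTheory ProbabilityTheory

/-!
A noising step shrinks the law by `√a` and convolves it with `N(0, 1 - a)`. Shrinking distributes
over convolution, so a step with parameter `b` followed by one with parameter `a` shrinks by
`√(a * b)` and adds the independent Gaussian variances `a * (1 - b) + (1 - a) = 1 - a * b`: it is
the single step with parameter `a * b`. The parameters therefore multiply along the process, from
any initial law.
-/

/-- The DDPM transition applied to a law `ν`: the law of `√a * X + √(1 - a) * Z` with `X ∼ ν` and
`Z ∼ N(0, 1)` independent. It is meant for `0 ≤ a ≤ 1`, where both radicands are nonnegative. -/
noncomputable def noising (a : ℝ) (ν : Measure ℝ) : Measure ℝ :=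
  (ν.prod (gaussianReal 0 1)).map fun p ↦ √a * p.1 + √(1 - a) * p.2

lemma gaussianReal_map_sqrt_mul (a m : ℝ) (v : NNReal) :
    (gaussianReal m v).map (√a * ·) = gaussianReal (√a * m) (a.toNNReal * v) := by
  rw [gaussianReal_map_const_mul]
  congr 2
  ext
  exact Real.sq_sqrt'

section Convolution

variable {R : Type*} [NonUnitalNonAssocSemiring R] [MeasurableSpace R] [MeasurableAdd₂ R]
  [MeasurableMul R] (ν ρ : Measure R) [SFinite ν] [SFinite ρ]

lemma map_const_mul_add_const_mul_prod (c d : R) :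
    (ν.prod ρ).map (fun p ↦ c * p.1 + d * p.2) = ν.map (c * ·) ∗ ρ.map (d * ·) := by
  rw [Measure.conv, Measure.map_prod_map _ _ (by fun_prop) (by fun_prop),
    Measure.map_map (by fun_prop) (by fun_prop)]
  rfl

lemma map_const_mul_conv (c : R) :
    (ν ∗ ρ).map (c * ·) = ν.map (c * ·) ∗ ρ.map (c * ·) :=
  Measure.map_conv_addMonoidHom (AddMonoidHom.mulLeft c) (measurable_const_mul c)

end Convolution

section Noising

variable (ν : Measure ℝ) [SFinite ν]

instance sFinite_noising (a : ℝ) : SFinite (noising a ν) := by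
  unfold noising
  infer_instance

lemma noising_eq_conv (a : ℝ) :
    noising a ν = ν.map (√a * ·) ∗ gaussianReal 0 (1 - a).toNNReal := by
  rw [noising, map_const_mul_add_const_mul_prod, gaussianReal_map_sqrt_mul, mul_zero, mul_one]

lemma noising_one : noising 1 ν = ν := by
  simp [noising_eq_conv, gaussianReal_zero_var]

lemma noising_noising {a b : ℝ} (ha₀ : 0 ≤ a) (ha₁ : a ≤ 1) (hb : b ≤ 1) :
    noising a (noising b ν) = noising (a * b) ν := by
  have scale : (ν.map (√b * ·)).map (√a * ·) = ν.map (√(a * b) * ·) := by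
    rw [Measure.map_map (by fun_prop) (by fun_prop), Real.sqrt_mul ha₀]
    simp only [Function.comp_def, mul_assoc]
  have variance :
      a.toNNReal * (1 - b).toNNReal + (1 - a).toNNReal = (1 - a * b).toNNReal := by
    rw [← Real.toNNReal_mul ha₀,
      ← Real.toNNReal_add (mul_nonneg ha₀ (sub_nonneg.2 hb)) (sub_nonneg.2 ha₁)]
    ring_nf
  calc noising a (noising b ν)
    _ = (ν.map (√b * ·) ∗ gaussianReal 0 (1 - b).toNNReal).map (√a * ·) ∗
          gaussianReal 0 (1 - a).toNNReal := by rw [noising_eq_conv, noising_eq_conv]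
    _ = ν.map (√(a * b) * ·) ∗
          (gaussianReal 0 (a.toNNReal * (1 - b).toNNReal) ∗ gaussianReal 0 (1 - a).toNNReal) := by
        rw [map_const_mul_conv, scale, gaussianReal_map_sqrt_mul, mul_zero, Measure.conv_assoc]
    _ = noising (a * b) ν := by
        rw [gaussianReal_conv_gaussianReal, add_zero, variance, ← noising_eq_conv]

end Noising

lemma noising_dirac (a x : ℝ) :
    noising a (Measure.dirac x) = gaussianReal (√a * x) (1 - a).toNNReal := by
  rw [noising_eq_conv, ← gaussianReal_zero_var, gaussianReal_map_sqrt_mul,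
    gaussianReal_conv_gaussianReal, mul_zero, add_zero, zero_add]

theorem ddpm_reparameterisation_general (α : ℕ → ℝ) (hα : ∀ t, 1 ≤ t → 0 ≤ α t ∧ α t ≤ 1)
    (μ : ℕ → Measure ℝ) [SFinite (μ 0)] (hμ : ∀ t, μ (t + 1) = noising (α (t + 1)) (μ t)) (t : ℕ) :
    μ t = noising (∏ u ∈ Finset.Icc 1 t, α u) (μ 0) := by
  induction t with
  | zero => simp [noising_one]
  | succ t ih =>
    have hprod : ∏ u ∈ Finset.Icc 1 t, α u ≤ 1 :=
      Finset.prod_le_one (fun u hu ↦ (hα u (Finset.mem_Icc.1 hu).1).1)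
        fun u hu ↦ (hα u (Finset.mem_Icc.1 hu).1).2
    obtain ⟨hα₀, hα₁⟩ := hα (t + 1) t.succ_pos
    rw [hμ, ih, noising_noising _ hα₀ hα₁ hprod, Finset.prod_Icc_succ_top t.succ_pos, mul_comm]

/-- Reparameterisation trick: the DDPM forward process
`x_t = √(α_t) x_{t−1} + √(1 − α_t) ε_t` started at the Dirac measure at `x₀`
has, at every step `t`, the Gaussian law with mean `√(ᾱ_t) x₀` and variance
`1 − ᾱ_t`, where `ᾱ_t = ∏_{u=1}^{t} α_u`. -/
theorem ddpm_reparameterisation (x₀ : ℝ) (α : ℕ → ℝ)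
    (hα : ∀ t, 1 ≤ t → 0 < α t ∧ α t ≤ 1)
    (abar : ℕ → ℝ) (habar : ∀ t, abar t = ∏ u ∈ Finset.Icc 1 t, α u)
    (μ : ℕ → Measure ℝ)
    (hμ0 : μ 0 = Measure.dirac x₀)
    (hμ : ∀ t, μ (t + 1) =
      Measure.map
        (fun p : ℝ × ℝ =>
          Real.sqrt (α (t + 1)) * p.1 + Real.sqrt (1 - α (t + 1)) * p.2)
        ((μ t).prod (gaussianReal 0 1))) :
    ∀ t, μ t = gaussianReal (Real.sqrt (abar t) * x₀)
        (Real.toNNReal (1 - abar t)) := by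
  intro t
  have : SFinite (μ 0) := hμ0 ▸ inferInstance
  rw [ddpm_reparameterisation_general α (fun t ht ↦ (hα t ht).imp_left le_of_lt) μ hμ t, hμ0,
    noising_dirac, habar]
end
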